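/- Let c > 2 and let φ : ℝ² → ℝ be a smooth, doubly 2π-periodic, symmetric, positive solution of −Δφ + cφ = φ² which minimizes B_c subject to the constraint ∫|u|³ = ∫φ³ (i.e., B_c(φ) ≤ B_c(u) for every smooth, doubly 2π-periodic, symmetric u : ℝ² → ℝ with ∫|u|³ dxdy = ∫φ³ dxdy). Define the quadratic form Q₁(v) = ∫(|∇v|² + c v² − 2φ v²) dxdy associated with 𝓛₁ = −Δ + c − 2φ. Then: (i) Q₁(φ) < 0; and (ii) Q₁ admits no two-dimensional negative subspace, i.e., whenever v, w are smooth, doubly 2π-periodic, symmetric functions such that Q₁(αv + βw) < 0 for every pair of reals (α,β) ≠ (0,0), the functions v and w are linearly dependent. In particular 𝓛₁ has exactly one negative direction. -/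

import Mathlib

/-!
Let `N = ∫φ³ > 0`. Testing the equation with `φ` (integration by parts on the torus, `bil_eq`)
gives `∫|∇φ|² + cφ² = N`, so `Q₁(φ) = N - 2N < 0`.

For the second claim, some combination `h = αv + βw` with `(α, β) ≠ (0, 0)` satisfies
`∫φ²h = 0`, and `Qone_nonneg_of_tangent` shows `Q₁(h) ≥ 0` for such `h`;
hence no two-dimensional negative subspace exists.
To see `Q₁(h) ≥ 0`, put `b = ∫|∇h|² + ch²`, `P = ∫φh²`, `R = ∫h³`. For small `t > 0`
the function `φ + th` is positive on the square, and, the first-order terms being multiples of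
`∫φ²h`, one has `2B_c(φ + th) = N + t²b` and `D := ∫(φ + th)³ = N + 3t²P + t³R`.
Comparing `φ` with `(N/D)^(1/3) (φ + th)` and cubing yields `N D² ≤ (N + t²b)³`; dividing the
terms of order at least two by `t²` and letting `t → 0` gives `2P ≤ b`.
-/

noncomputable section
open Real MeasureTheory Filter

/-- doubly 2π-periodic -/
def DblPeriodic (u : ℝ → ℝ → ℝ) : Prop :=
  ∀ x y : ℝ, u (x + 2*π) y = u x y ∧ u x (y + 2*π) = u x y

/-- symmetric: even in each variable separately -/
def SymFun (u : ℝ → ℝ → ℝ) : Prop :=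
  ∀ x y : ℝ, u (-x) y = u x y ∧ u x (-y) = u x y

/-- smooth as a function on ℝ² -/
def Smooth2 (u : ℝ → ℝ → ℝ) : Prop :=
  ContDiff ℝ (⊤ : ℕ∞) fun p : ℝ × ℝ => u p.1 p.2

/-- the Laplacian Δu = u_xx + u_yy -/
def lap (u : ℝ → ℝ → ℝ) (x y : ℝ) : ℝ :=
  deriv (fun t => deriv (fun s => u s y) t) x + deriv (fun t => deriv (fun s => u x s) t) y

/-- integral over the fundamental square [0,2π] × [0,2π] -/
def integ2 (f : ℝ → ℝ → ℝ) : ℝ :=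
  ∫ x in (0:ℝ)..(2*π), ∫ y in (0:ℝ)..(2*π), f x y

/-- partial derivative in the first variable -/
def pdx (u : ℝ → ℝ → ℝ) (x y : ℝ) : ℝ := deriv (fun s => u s y) x

/-- partial derivative in the second variable -/
def pdy (u : ℝ → ℝ → ℝ) (x y : ℝ) : ℝ := deriv (fun s => u x s) y

/-- the functional B_c(u) = (1/2)∫(|∇u|² + c u²) dxdy -/
def Bc (c : ℝ) (u : ℝ → ℝ → ℝ) : ℝ :=
  (1/2) * integ2 (fun x y => (pdx u x y)^2 + (pdy u x y)^2 + c * (u x y)^2)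

/-- the quadratic form of 𝓛₁ = −Δ + c − 2φ -/
def Qone (c : ℝ) (φ v : ℝ → ℝ → ℝ) : ℝ :=
  integ2 (fun x y =>
    (pdx v x y)^2 + (pdy v x y)^2 + c * (v x y)^2 - 2 * φ x y * (v x y)^2)

/-- Continuity as a function on `ℝ²`. -/
def Cont2 (f : ℝ → ℝ → ℝ) : Prop := Continuous fun p : ℝ × ℝ => f p.1 p.2

lemma Cont2.add {f g : ℝ → ℝ → ℝ} (hf : Cont2 f) (hg : Cont2 g) :
    Cont2 fun x y => f x y + g x y := Continuous.add hf hg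

lemma Cont2.mul {f g : ℝ → ℝ → ℝ} (hf : Cont2 f) (hg : Cont2 g) :
    Cont2 fun x y => f x y * g x y := Continuous.mul hf hg

lemma Cont2.cmul {f : ℝ → ℝ → ℝ} (a : ℝ) (hf : Cont2 f) :
    Cont2 fun x y => a * f x y := continuous_const.mul hf

lemma Cont2.pow {f : ℝ → ℝ → ℝ} (hf : Cont2 f) (n : ℕ) :
    Cont2 fun x y => f x y ^ n := Continuous.pow hf n

/-! ### The iterated integral on continuous functions -/

lemma Cont2.inner {f : ℝ → ℝ → ℝ} (hf : Cont2 f) :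
    Continuous fun x => ∫ y in (0:ℝ)..(2*π), f x y :=
  intervalIntegral.continuous_parametric_intervalIntegral_of_continuous' hf _ _

lemma Cont2.slice_right {f : ℝ → ℝ → ℝ} (hf : Cont2 f) (x : ℝ) : Continuous (f x) :=
  hf.comp (Continuous.prodMk_right x)

lemma Cont2.slice_left {f : ℝ → ℝ → ℝ} (hf : Cont2 f) (y : ℝ) : Continuous (fun x => f x y) :=
  hf.comp (Continuous.prodMk_left y)

lemma integ2_add {f g : ℝ → ℝ → ℝ} (hf : Cont2 f) (hg : Cont2 g) :
    integ2 (fun x y => f x y + g x y) = integ2 f + integ2 g := by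
  unfold integ2
  rw [← intervalIntegral.integral_add (hf.inner.intervalIntegrable _ _)
    (hg.inner.intervalIntegrable _ _)]
  congr 1
  funext x
  exact intervalIntegral.integral_add ((hf.slice_right x).intervalIntegrable _ _)
    ((hg.slice_right x).intervalIntegrable _ _)

lemma integ2_const_mul (a : ℝ) (f : ℝ → ℝ → ℝ) :
    integ2 (fun x y => a * f x y) = a * integ2 f := by
  unfold integ2
  simp only [intervalIntegral.integral_const_mul]

lemma integ2_pos {f : ℝ → ℝ → ℝ} (hf : Cont2 f)
    (h : ∀ x ∈ Set.Icc 0 (2*π), ∀ y ∈ Set.Icc 0 (2*π), 0 < f x y) : 0 < integ2 f := by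
  have hπ : 0 < 2 * π := by positivity
  refine intervalIntegral.intervalIntegral_pos_of_pos_on (hf.inner.intervalIntegrable _ _)
    (fun x hx => ?_) hπ
  exact intervalIntegral.intervalIntegral_pos_of_pos_on ((hf.slice_right x).intervalIntegrable _ _)
    (fun y hy => h x (Set.Ioo_subset_Icc_self hx) y (Set.Ioo_subset_Icc_self hy)) hπ

lemma integ2_congr {f g : ℝ → ℝ → ℝ}
    (h : ∀ x ∈ Set.Icc 0 (2*π), ∀ y ∈ Set.Icc 0 (2*π), f x y = g x y) :
    integ2 f = integ2 g := by
  have hπ : (0:ℝ) ≤ 2 * π := by positivity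
  refine intervalIntegral.integral_congr fun x hx => ?_
  refine intervalIntegral.integral_congr fun y hy => ?_
  rw [Set.uIcc_of_le hπ] at hx hy
  exact h x hx y hy

lemma integ2_swap {f : ℝ → ℝ → ℝ} (hf : Cont2 f) :
    integ2 f = ∫ y in (0:ℝ)..(2*π), ∫ x in (0:ℝ)..(2*π), f x y := by
  have hf' : Continuous (Function.uncurry f) := hf
  refine intervalIntegral_intervalIntegral_swap ?_
  exact (hf'.continuousOn.integrableOn_compact (isCompact_uIcc.prod isCompact_uIcc)).mono_set
    (Set.prod_mono Set.uIoc_subset_uIcc Set.uIoc_subset_uIcc)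

/-! ### Partial derivatives -/

lemma Smooth2.cont {u : ℝ → ℝ → ℝ} (hu : Smooth2 u) : Cont2 u := ContDiff.continuous hu

lemma Smooth2.hasDerivAt_x {u : ℝ → ℝ → ℝ} (hu : Smooth2 u) (x y : ℝ) :
    HasDerivAt (fun s => u s y)
      (fderiv ℝ (fun p : ℝ × ℝ => u p.1 p.2) (x, y) (1, 0)) x := by
  have h1 : HasFDerivAt (fun p : ℝ × ℝ => u p.1 p.2) _ (x, y) :=
    ((ContDiff.differentiable hu (by simp)) (x, y)).hasFDerivAt
  exact h1.comp_hasDerivAt x ((hasDerivAt_id x).prodMk (hasDerivAt_const x y))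

lemma Smooth2.hasDerivAt_y {u : ℝ → ℝ → ℝ} (hu : Smooth2 u) (x y : ℝ) :
    HasDerivAt (fun s => u x s)
      (fderiv ℝ (fun p : ℝ × ℝ => u p.1 p.2) (x, y) (0, 1)) y := by
  have h1 : HasFDerivAt (fun p : ℝ × ℝ => u p.1 p.2) _ (x, y) :=
    ((ContDiff.differentiable hu (by simp)) (x, y)).hasFDerivAt
  exact h1.comp_hasDerivAt y ((hasDerivAt_const y x).prodMk (hasDerivAt_id y))

lemma Smooth2.pdx {u : ℝ → ℝ → ℝ} (hu : Smooth2 u) : Smooth2 (pdx u) := by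
  have h : ContDiff ℝ (⊤ : ℕ∞)
      fun p : ℝ × ℝ => fderiv ℝ (fun p : ℝ × ℝ => u p.1 p.2) p (1, 0) :=
    (ContDiff.fderiv_right (m := ((⊤ : ℕ∞) : WithTop ℕ∞)) hu le_rfl).clm_apply contDiff_const
  unfold Smooth2
  convert h using 2 with p
  exact (hu.hasDerivAt_x p.1 p.2).deriv

lemma Smooth2.pdy {u : ℝ → ℝ → ℝ} (hu : Smooth2 u) : Smooth2 (pdy u) := by
  have h : ContDiff ℝ (⊤ : ℕ∞)
      fun p : ℝ × ℝ => fderiv ℝ (fun p : ℝ × ℝ => u p.1 p.2) p (0, 1) :=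
    (ContDiff.fderiv_right (m := ((⊤ : ℕ∞) : WithTop ℕ∞)) hu le_rfl).clm_apply contDiff_const
  unfold Smooth2
  convert h using 2 with p
  exact (hu.hasDerivAt_y p.1 p.2).deriv

lemma Smooth2.hasDerivAt_pdx {u : ℝ → ℝ → ℝ} (hu : Smooth2 u) (x y : ℝ) :
    HasDerivAt (fun s => u s y) (_root_.pdx u x y) x :=
  (hu.hasDerivAt_x x y).differentiableAt.hasDerivAt

lemma Smooth2.hasDerivAt_pdy {u : ℝ → ℝ → ℝ} (hu : Smooth2 u) (x y : ℝ) :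
    HasDerivAt (fun s => u x s) (_root_.pdy u x y) y :=
  (hu.hasDerivAt_y x y).differentiableAt.hasDerivAt

lemma Smooth2.lin {u v : ℝ → ℝ → ℝ} (hu : Smooth2 u) (hv : Smooth2 v) (a b : ℝ) :
    Smooth2 (fun x y => a * u x y + b * v x y) :=
  ContDiff.add (contDiff_const.mul hu) (contDiff_const.mul hv)

lemma DblPeriodic.lin {u v : ℝ → ℝ → ℝ} (hu : DblPeriodic u) (hv : DblPeriodic v) (a b : ℝ) :
    DblPeriodic (fun x y => a * u x y + b * v x y) := fun x y => by
  simp only [(hu x y).1, (hu x y).2, (hv x y).1, (hv x y).2, and_self]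

lemma SymFun.lin {u v : ℝ → ℝ → ℝ} (hu : SymFun u) (hv : SymFun v) (a b : ℝ) :
    SymFun (fun x y => a * u x y + b * v x y) := fun x y => by
  simp only [(hu x y).1, (hu x y).2, (hv x y).1, (hv x y).2, and_self]

lemma pdx_lin {u v : ℝ → ℝ → ℝ} (hu : Smooth2 u) (hv : Smooth2 v) (a b x y : ℝ) :
    pdx (fun x y => a * u x y + b * v x y) x y = a * pdx u x y + b * pdx v x y :=
  (((hu.hasDerivAt_pdx x y).const_mul a).add ((hv.hasDerivAt_pdx x y).const_mul b)).deriv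

lemma pdy_lin {u v : ℝ → ℝ → ℝ} (hu : Smooth2 u) (hv : Smooth2 v) (a b x y : ℝ) :
    pdy (fun x y => a * u x y + b * v x y) x y = a * pdy u x y + b * pdy v x y :=
  (((hu.hasDerivAt_pdy x y).const_mul a).add ((hv.hasDerivAt_pdy x y).const_mul b)).deriv

lemma DblPeriodic.pdx {u : ℝ → ℝ → ℝ} (hu : DblPeriodic u) (x y : ℝ) :
    pdx u (x + 2*π) y = pdx u x y := by
  unfold _root_.pdx
  rw [← deriv_comp_add_const]
  congr 1
  funext s
  exact (hu s y).1

lemma DblPeriodic.pdy {u : ℝ → ℝ → ℝ} (hu : DblPeriodic u) (x y : ℝ) :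
    pdy u x (y + 2*π) = pdy u x y := by
  unfold _root_.pdy
  rw [← deriv_comp_add_const]
  congr 1
  funext s
  exact (hu x s).2

/-! ### Integration by parts on the torus -/

lemma integ2_ibp_x {u h : ℝ → ℝ → ℝ} (hu : Smooth2 u) (pu : DblPeriodic u)
    (hh : Smooth2 h) (ph : DblPeriodic h) :
    integ2 (fun x y => pdx u x y * pdx h x y) =
      - integ2 (fun x y => pdx (pdx u) x y * h x y) := by
  rw [integ2_swap (hu.pdx.cont.mul hh.pdx.cont), integ2_swap (hu.pdx.pdx.cont.mul hh.cont),
    ← intervalIntegral.integral_neg]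
  congr 1
  funext y
  rw [intervalIntegral.integral_mul_deriv_eq_deriv_mul
    (fun x _ => hu.pdx.hasDerivAt_pdx x y) (fun x _ => hh.hasDerivAt_pdx x y)
    ((hu.pdx.pdx.cont.slice_left y).intervalIntegrable _ _)
    ((hh.pdx.cont.slice_left y).intervalIntegrable _ _)]
  have h1 := pu.pdx 0 y
  have h2 := (ph 0 y).1
  rw [zero_add] at h1 h2
  rw [h1, h2]
  ring

lemma integ2_ibp_y {u h : ℝ → ℝ → ℝ} (hu : Smooth2 u) (pu : DblPeriodic u)
    (hh : Smooth2 h) (ph : DblPeriodic h) :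
    integ2 (fun x y => pdy u x y * pdy h x y) =
      - integ2 (fun x y => pdy (pdy u) x y * h x y) := by
  unfold integ2
  rw [← intervalIntegral.integral_neg]
  congr 1
  funext x
  rw [intervalIntegral.integral_mul_deriv_eq_deriv_mul
    (fun y _ => hu.pdy.hasDerivAt_pdy x y) (fun y _ => hh.hasDerivAt_pdy x y)
    ((hu.pdy.pdy.cont.slice_right x).intervalIntegrable _ _)
    ((hh.pdy.cont.slice_right x).intervalIntegrable _ _)]
  have h1 := pu.pdy x 0
  have h2 := (ph x 0).2
  rw [zero_add] at h1 h2
  rw [h1, h2]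
  ring

/-- The bilinear form of `2 B_c`. -/
def bil (c : ℝ) (u h : ℝ → ℝ → ℝ) : ℝ :=
  integ2 (fun x y => pdx u x y * pdx h x y + pdy u x y * pdy h x y + c * (u x y * h x y))

/-- The weak form of `−Δφ + cφ = φ²`. -/
lemma bil_eq {c : ℝ} {φ h : ℝ → ℝ → ℝ} (hs : Smooth2 φ) (hper : DblPeriodic φ)
    (heq : ∀ x y : ℝ, -(lap φ x y) + c * φ x y = (φ x y)^2)
    (hh : Smooth2 h) (ph : DblPeriodic h) :
    bil c φ h = integ2 (fun x y => (φ x y)^2 * h x y) := by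
  have cx := hs.pdx.cont.mul hh.pdx.cont
  have cy := hs.pdy.cont.mul hh.pdy.cont
  have cxx := hs.pdx.pdx.cont.mul hh.cont
  have cyy := hs.pdy.pdy.cont.mul hh.cont
  have c0 := hs.cont.mul hh.cont
  have e : (fun x y => (φ x y)^2 * h x y) = fun x y =>
      ((-1) * (pdx (pdx φ) x y * h x y) + (-1) * (pdy (pdy φ) x y * h x y))
        + c * (φ x y * h x y) := by
    funext x y
    rw [← heq x y]
    simp only [lap, pdx, pdy]
    ring
  rw [e, bil, integ2_add (cx.add cy) (Cont2.cmul _ c0), integ2_add cx cy,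
    integ2_add ((Cont2.cmul _ cxx).add (Cont2.cmul _ cyy))
      (Cont2.cmul _ c0),
    integ2_add (Cont2.cmul _ cxx) (Cont2.cmul _ cyy),
    integ2_const_mul (-1), integ2_const_mul (-1),
    integ2_ibp_x hs hper hh ph, integ2_ibp_y hs hper hh ph]
  ring

/-! ### Expansions along a line -/

lemma cont_bil (c : ℝ) {u h : ℝ → ℝ → ℝ} (hu : Smooth2 u) (hh : Smooth2 h) :
    Cont2 (fun x y => pdx u x y * pdx h x y + pdy u x y * pdy h x y + c * (u x y * h x y)) :=
  ((hu.pdx.cont.mul hh.pdx.cont).add (hu.pdy.cont.mul hh.pdy.cont)).add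
    (Cont2.cmul _ (hu.cont.mul hh.cont))

lemma Bc_eq_bil (c : ℝ) (u : ℝ → ℝ → ℝ) : Bc c u = (1/2) * bil c u u := by
  simp only [Bc, bil, pow_two]

lemma bil_lin (c : ℝ) {u h : ℝ → ℝ → ℝ} (hu : Smooth2 u) (hh : Smooth2 h) (a b : ℝ) :
    bil c (fun x y => a * u x y + b * h x y) (fun x y => a * u x y + b * h x y) =
      a^2 * bil c u u + 2*a*b * bil c u h + b^2 * bil c h h := by
  have c1 := cont_bil c hu hu
  have c2 := cont_bil c hu hh
  have c3 := cont_bil c hh hh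
  simp only [bil]
  rw [← integ2_const_mul, ← integ2_const_mul, ← integ2_const_mul,
    ← integ2_add (Cont2.cmul _ c1) (Cont2.cmul _ c2),
    ← integ2_add ((Cont2.cmul _ c1).add (Cont2.cmul _ c2))
      (Cont2.cmul _ c3)]
  congr 1
  funext x y
  rw [pdx_lin hu hh, pdy_lin hu hh]
  ring

lemma Qone_eq (c : ℝ) {φ v : ℝ → ℝ → ℝ} (hs : Smooth2 φ) (hv : Smooth2 v) :
    Qone c φ v = bil c v v - 2 * integ2 (fun x y => φ x y * (v x y)^2) := by
  have c2 : Cont2 fun x y => φ x y * (v x y)^2 := hs.cont.mul (hv.cont.pow 2)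
  rw [sub_eq_add_neg, ← neg_mul, ← integ2_const_mul, bil,
    ← integ2_add (cont_bil c hv hv) (Cont2.cmul _ c2), Qone]
  congr 1
  funext x y
  ring

lemma integ2_cube {φ h : ℝ → ℝ → ℝ} (hs : Smooth2 φ) (hh : Smooth2 h) (t : ℝ) :
    integ2 (fun x y => (φ x y + t * h x y)^3) =
      integ2 (fun x y => (φ x y)^3) + 3*t * integ2 (fun x y => (φ x y)^2 * h x y)
        + 3*t^2 * integ2 (fun x y => φ x y * (h x y)^2) + t^3 * integ2 (fun x y => (h x y)^3) := by
  have c1 : Cont2 fun x y => (φ x y)^3 := hs.cont.pow 3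
  have c2 : Cont2 fun x y => (φ x y)^2 * h x y := (hs.cont.pow 2).mul hh.cont
  have c3 : Cont2 fun x y => φ x y * (h x y)^2 := hs.cont.mul (hh.cont.pow 2)
  have c4 : Cont2 fun x y => (h x y)^3 := hh.cont.pow 3
  rw [← integ2_const_mul, ← integ2_const_mul, ← integ2_const_mul,
    ← integ2_add c1 (Cont2.cmul _ c2),
    ← integ2_add (c1.add (Cont2.cmul _ c2)) (Cont2.cmul _ c3),
    ← integ2_add ((c1.add (Cont2.cmul _ c2)).add (Cont2.cmul _ c3))
      (Cont2.cmul _ c4)]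
  congr 1
  funext x y
  ring

/-- By compactness of the square, small perturbations of `φ` stay positive there. -/
lemma eventually_pos {φ h : ℝ → ℝ → ℝ} (hs : Cont2 φ) (hh : Cont2 h)
    (hpos : ∀ x y : ℝ, 0 < φ x y) :
    ∀ᶠ t in nhdsWithin (0:ℝ) (Set.Ioi 0),
      ∀ x ∈ Set.Icc 0 (2*π), ∀ y ∈ Set.Icc 0 (2*π), 0 < φ x y + t * h x y := by
  have hK : IsCompact (Set.Icc (0:ℝ) (2*π) ×ˢ Set.Icc (0:ℝ) (2*π)) :=
    isCompact_Icc.prod isCompact_Icc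
  have key : ∀ᶠ t in nhds (0:ℝ), ∀ p ∈ Set.Icc (0:ℝ) (2*π) ×ˢ Set.Icc (0:ℝ) (2*π),
      0 < φ p.1 p.2 + t * h p.1 p.2 := by
    refine hK.eventually_forall_of_forall_eventually fun p _ => ?_
    have hc : Continuous fun q : ℝ × (ℝ × ℝ) => φ q.2.1 q.2.2 + q.1 * h q.2.1 q.2.2 :=
      (hs.comp continuous_snd).add (continuous_fst.mul (hh.comp continuous_snd))
    refine hc.continuousAt.eventually (lt_mem_nhds ?_)
    simpa using hpos p.1 p.2
  filter_upwards [nhdsWithin_le_nhds key] with t ht x hx y hy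
  exact ht (x, y) ⟨hx, hy⟩

/-- Second-order minimality: `Q₁(h) ≥ 0` for directions `h` tangent to the constraint.
The competitor is `s(φ + th)`, with `s` chosen to restore `∫|u|³ = ∫φ³`. -/
lemma Qone_nonneg_of_tangent {c : ℝ} {φ h : ℝ → ℝ → ℝ}
    (hs : Smooth2 φ) (hper : DblPeriodic φ) (hsym : SymFun φ)
    (hpos : ∀ x y : ℝ, 0 < φ x y)
    (heq : ∀ x y : ℝ, -(lap φ x y) + c * φ x y = (φ x y)^2)
    (hmin : ∀ u : ℝ → ℝ → ℝ, Smooth2 u → DblPeriodic u → SymFun u →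
      integ2 (fun x y => |u x y|^3) = integ2 (fun x y => (φ x y)^3) →
      Bc c φ ≤ Bc c u)
    (hh : Smooth2 h) (ph : DblPeriodic h) (sh : SymFun h)
    (htan : integ2 (fun x y => (φ x y)^2 * h x y) = 0) :
    0 ≤ Qone c φ h := by
  have hNpos : 0 < integ2 (fun x y => (φ x y)^3) :=
    integ2_pos (hs.cont.pow 3) fun x _ y _ => pow_pos (hpos x y) 3
  have hφφ : bil c φ φ = integ2 (fun x y => (φ x y)^3) := by
    rw [bil_eq hs hper heq hs hper]
    congr 1
  have hφh : bil c φ h = 0 := by rw [bil_eq hs hper heq hh ph, htan]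
  rw [Qone_eq c hs hh]
  have hcube := integ2_cube hs hh
  rw [htan] at hcube
  set N := integ2 (fun x y => (φ x y)^3) with hN
  set P := integ2 (fun x y => φ x y * (h x y)^2)
  set R := integ2 (fun x y => (h x y)^3)
  set b := bil c h h with hb
  have main : ∀ᶠ t in nhdsWithin (0:ℝ) (Set.Ioi 0),
      6*N^2*P + 2*N^2*t*R ≤ 3*N^2*b + 3*N*t^2*b^2 + t^4*b^3 := by
    filter_upwards [eventually_pos hs.cont hh.cont hpos, self_mem_nhdsWithin] with t ht ht0
    have ht0 : 0 < t := ht0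
    have hD : 0 < integ2 (fun x y => (φ x y + t * h x y)^3) :=
      integ2_pos ((hs.cont.add (Cont2.cmul _ hh.cont)).pow 3)
        fun x hx y hy => pow_pos (ht x hx y hy) 3
    set D := integ2 (fun x y => (φ x y + t * h x y)^3) with hDdef
    have hDe : D = N + 3*t^2*P + t^3*R := (hcube t).trans (by ring)
    set s : ℝ := (N / D) ^ (1/3 : ℝ) with hsdef
    have hs0 : 0 < s := Real.rpow_pos_of_pos (div_pos hNpos hD) _
    have hs3 : s^3 * D = N := by
      have : s^3 = N / D := by
        rw [hsdef, ← Real.rpow_natCast, ← Real.rpow_mul (div_pos hNpos hD).le]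
        norm_num
      rw [this]
      field_simp
    have hle := hmin (fun x y => s * φ x y + (s*t) * h x y) (hs.lin hh _ _) (hper.lin ph _ _)
      (hsym.lin sh _ _) (by
        rw [← hs3, hDdef, ← integ2_const_mul]
        refine integ2_congr fun x hx y hy => ?_
        have e : s * φ x y + s * t * h x y = s * (φ x y + t * h x y) := by ring
        rw [e, abs_of_pos (mul_pos hs0 (ht x hx y hy))]
        ring)
    rw [Bc_eq_bil, Bc_eq_bil, bil_lin c hs hh, hφφ, hφh, ← hb] at hle
    have hle' : N ≤ s^2 * (N + t^2*b) := by nlinarith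
    -- Cubing eliminates the cube root `s`.
    have h3 : N^3 ≤ (s^2 * (N + t^2*b))^3 := pow_le_pow_left₀ hNpos.le hle' 3
    have h4 : N^2 * (N * D^2) ≤ N^2 * (N + t^2*b)^3 := by
      calc N^2 * (N * D^2) = N^3 * D^2 := by ring
        _ ≤ (s^2 * (N + t^2*b))^3 * D^2 := by gcongr
        _ = (s^3 * D)^2 * (N + t^2*b)^3 := by ring
        _ = _ := by rw [hs3]
    have h5 : N * D^2 ≤ (N + t^2*b)^3 := le_of_mul_le_mul_left h4 (by positivity)
    have h6 : t^2 * (6*N^2*P + 2*N^2*t*R) ≤ t^2 * (3*N^2*b + 3*N*t^2*b^2 + t^4*b^3) := by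
      have h7 : 0 ≤ N * (3*t^2*P + t^3*R)^2 := by positivity
      rw [hDe] at h5
      linarith
    exact le_of_mul_le_mul_left h6 (by positivity)
  have hL : Tendsto (fun t : ℝ => 6*N^2*P + 2*N^2*t*R) (nhdsWithin 0 (Set.Ioi 0))
      (nhds (6*N^2*P)) := by
    have : Continuous fun t : ℝ => 6*N^2*P + 2*N^2*t*R := by fun_prop
    simpa using (this.tendsto 0).mono_left nhdsWithin_le_nhds
  have hRt : Tendsto (fun t : ℝ => 3*N^2*b + 3*N*t^2*b^2 + t^4*b^3) (nhdsWithin 0 (Set.Ioi 0))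
      (nhds (3*N^2*b)) := by
    have : Continuous fun t : ℝ => 3*N^2*b + 3*N*t^2*b^2 + t^4*b^3 := by fun_prop
    simpa using (this.tendsto 0).mono_left nhdsWithin_le_nhds
  have hfin := le_of_tendsto_of_tendsto hL hRt main
  have : (3*N^2) * (2*P) ≤ (3*N^2) * b := by linarith
  have := le_of_mul_le_mul_left this (by positivity)
  linarith

/-- For a positive constrained minimizer φ of B_c (c > 2) solving −Δφ + cφ = φ²:
Q₁(φ) < 0, and Q₁ admits no two-dimensional negative subspace, i.e. 𝓛₁ has exactly
one negative direction. -/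
theorem Lone_one_negative_direction (c : ℝ) (hc : 2 < c) (φ : ℝ → ℝ → ℝ)
    (hs : Smooth2 φ) (hper : DblPeriodic φ) (hsym : SymFun φ)
    (hpos : ∀ x y : ℝ, 0 < φ x y)
    (heq : ∀ x y : ℝ, -(lap φ x y) + c * φ x y = (φ x y)^2)
    (hmin : ∀ u : ℝ → ℝ → ℝ, Smooth2 u → DblPeriodic u → SymFun u →
      integ2 (fun x y => |u x y|^3) = integ2 (fun x y => (φ x y)^3) →
      Bc c φ ≤ Bc c u) :
    Qone c φ φ < 0 ∧
    ∀ v w : ℝ → ℝ → ℝ, Smooth2 v → DblPeriodic v → SymFun v →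
      Smooth2 w → DblPeriodic w → SymFun w →
      (∀ α β : ℝ, ¬(α = 0 ∧ β = 0) →
        Qone c φ (fun x y => α * v x y + β * w x y) < 0) →
      ∃ α β : ℝ, ¬(α = 0 ∧ β = 0) ∧ ∀ x y : ℝ, α * v x y + β * w x y = 0 := by
  constructor
  · have hNpos : 0 < integ2 (fun x y => (φ x y)^3) :=
      integ2_pos (hs.cont.pow 3) fun x _ y _ => pow_pos (hpos x y) 3
    have e1 : (fun x y => (φ x y)^2 * φ x y) = fun x y => (φ x y)^3 := by
      funext x y; ring
    have e2 : (fun x y => φ x y * (φ x y)^2) = fun x y => (φ x y)^3 := by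
      funext x y; ring
    rw [Qone_eq c hs hs, bil_eq hs hper heq hs hper, e1, e2]
    linarith
  · intro v w hv pv sv hw pw sw hneg
    exfalso
    have cv : Cont2 fun x y => (φ x y)^2 * v x y := (hs.cont.pow 2).mul hv.cont
    have cw : Cont2 fun x y => (φ x y)^2 * w x y := (hs.cont.pow 2).mul hw.cont
    have hlin : ∀ α β : ℝ, integ2 (fun x y => (φ x y)^2 * (α * v x y + β * w x y)) =
        α * integ2 (fun x y => (φ x y)^2 * v x y) + β * integ2 (fun x y => (φ x y)^2 * w x y) := by
      intro α β
      rw [← integ2_const_mul, ← integ2_const_mul,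
        ← integ2_add (Cont2.cmul _ cv) (Cont2.cmul _ cw)]
      congr 1
      funext x y
      ring
    -- A two-dimensional space meets the hyperplane `∫φ²h = 0` nontrivially.
    obtain ⟨α, β, hne, h0⟩ : ∃ α β : ℝ, ¬(α = 0 ∧ β = 0) ∧
        α * integ2 (fun x y => (φ x y)^2 * v x y)
          + β * integ2 (fun x y => (φ x y)^2 * w x y) = 0 := by
      by_cases hz : integ2 (fun x y => (φ x y)^2 * v x y) = 0
      · exact ⟨1, 0, by simp, by simp [hz]⟩
      · exact ⟨-integ2 (fun x y => (φ x y)^2 * w x y), integ2 (fun x y => (φ x y)^2 * v x y),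
          fun h => hz h.2, by ring⟩
    have hge := Qone_nonneg_of_tangent hs hper hsym hpos heq hmin (hv.lin hw α β)
      (pv.lin pw α β) (sv.lin sw α β) ((hlin α β).trans h0)
    exact absurd (hneg α β hne) (not_lt.mpr hge)
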